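/- Let k ≥ 3 and let G be a finite simple graph containing pairwise disjoint pendant paths P_1, …, P_r, each P_i having p_i ≥ 2k + 3 vertices, where p_i = k + 2 + c_i + x_i(k + 1) with integers x_i ≥ 1 and 0 ≤ c_i ≤ k, and such that for each i the two neighbors outside P_i of the endpoints of P_i lie in Q = V(G) \ (P_1 ∪ ⋯ ∪ P_r). Suppose x_1 + ⋯ + x_r ≥ |Q| and let q = |Q|. Then G admits an equitable k-coloring if and only if the graph obtained from the subgraph of G induced by Q by adding q(k − 1) isolated vertices admits an equitable k-coloring. -/

import Mathlib

/-- `φ` is a proper coloring of the simple graph `G`. -/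
def IsProperColoring {V : Type*} {k : ℕ} (G : SimpleGraph V) (φ : V → Fin k) : Prop :=
  ∀ u v : V, G.Adj u v → φ u ≠ φ v

/-- Every color class of `φ` has size `⌊n/k⌋` or `⌈n/k⌉`, where `n` is the number of
vertices. -/
def IsEquitable {V : Type*} [Fintype V] {k : ℕ} (φ : V → Fin k) : Prop :=
  ∀ i : Fin k,
    (Finset.univ.filter fun v => φ v = i).card = Fintype.card V / k ∨
    (Finset.univ.filter fun v => φ v = i).card = (Fintype.card V + k - 1) / k

/-- `w` enumerates (injectively) a pendant path of `G`: the edges of `G` incident to the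
vertices `w 0, …, w (p-1)` are exactly the consecutive path edges together with exactly one
edge from `w 0` to a vertex `u` outside the path and exactly one edge from `w (p-1)` to a
vertex `v` outside the path. -/
def IsPendantPath {V : Type*} {p : ℕ} (G : SimpleGraph V) (w : Fin p → V) : Prop :=
  Function.Injective w ∧
  ∃ u v : V, u ∉ Set.range w ∧ v ∉ Set.range w ∧
    ∀ (i : Fin p) (b : V),
      G.Adj (w i) b ↔
        ((∃ j : Fin p, b = w j ∧ (i.val + 1 = j.val ∨ j.val + 1 = i.val)) ∨
          (i.val = 0 ∧ b = u) ∨ (i.val = p - 1 ∧ b = v))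


/-- The graph obtained from `G` by adding `m` isolated vertices. -/
def addIsolated {W : Type*} (G : SimpleGraph W) (m : ℕ) : SimpleGraph (W ⊕ Fin m) :=
  SimpleGraph.fromRel fun a b =>
    match a, b with
    | Sum.inl u, Sum.inl v => G.Adj u v
    | _, _ => False

/-- A discrete intermediate value property: every total between `∑ l` and `∑ u` is the sum of a
function lying between `l` and `u`. -/
theorem exists_between_sum_eq {ι : Type*} [Fintype ι] [DecidableEq ι] (l u : ι → ℕ)
    (hlu : ∀ j, l j ≤ u j) (m : ℕ) (hl : ∑ j, l j ≤ m) (hu : m ≤ ∑ j, u j) :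
    ∃ n : ι → ℕ, (∀ j, l j ≤ n j ∧ n j ≤ u j) ∧ ∑ j, n j = m := by
  induction m, hl using Nat.le_induction with
  | base => exact ⟨l, fun j => ⟨le_rfl, hlu j⟩, rfl⟩
  | succ m hm ih =>
    obtain ⟨n, hn, hs⟩ := ih (by omega)
    obtain ⟨j, -, hj⟩ := Finset.exists_lt_of_sum_lt (s := Finset.univ) (f := n) (g := u) (by omega)
    refine ⟨fun i => n i + if i = j then 1 else 0, fun i => ?_, ?_⟩
    · have := hn i
      by_cases h : i = j
      · subst h; simp only [if_true]; omega
      · simp only [h, if_false]; omega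
    · rw [Finset.sum_add_distrib, hs]; simp

theorem sum_tsub_le_of_le_add {ι : Type*} [Fintype ι] (d : ι → ℕ) (s h p : ℕ)
    (hsum : ∑ j, d j ≤ 3 * s + p) (hd : ∀ j, d j ≤ s + h) (hp : 2 * h ≤ p) :
    ∑ j, (d j - s) ≤ p := by
  set T := Finset.univ.filter fun j => s < d j with hT
  have hrestrict : ∑ j, (d j - s) = ∑ j ∈ T, (d j - s) := by
    rw [hT, Finset.sum_filter]
    refine Finset.sum_congr rfl fun j _ => ?_
    split_ifs <;> omega
  rw [hrestrict]
  rcases le_or_gt T.card 2 with hc | hc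
  · calc ∑ j ∈ T, (d j - s) ≤ T.card • h :=
          Finset.sum_le_card_nsmul _ _ _ fun j _ => by have := hd j; omega
      _ ≤ 2 * h := Nat.mul_le_mul_right _ hc
      _ ≤ p := hp
  · have h₁ : ∑ j ∈ T, (d j - s) + T.card * s = ∑ j ∈ T, d j := by
      rw [← smul_eq_mul, ← Finset.sum_const, ← Finset.sum_add_distrib]
      refine Finset.sum_congr rfl fun j hj => ?_
      have : s < d j := by simpa [hT] using hj
      omega
    have h₂ : ∑ j ∈ T, d j ≤ ∑ j, d j :=
      Finset.sum_le_sum_of_subset (Finset.subset_univ _)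
    have h₃ : 3 * s ≤ T.card * s := Nat.mul_le_mul_right _ hc
    omega

/-- Column totals `d` can be split over rows with totals `p i` and entries at most `h i`, provided
`2 * h i ≤ p i ≤ 3 * h i` and every column total is at most `∑ h i`. -/
theorem exists_matrix_row_col_sums {ρ ι : Type*} [DecidableEq ρ] [Fintype ι] [DecidableEq ι]
    (p h : ρ → ℕ) (h2 : ∀ i, 2 * h i ≤ p i) (h3 : ∀ i, p i ≤ 3 * h i) (s : Finset ρ)
    (d : ι → ℕ) (hd : ∀ j, d j ≤ ∑ i ∈ s, h i) (hsum : ∑ j, d j = ∑ i ∈ s, p i) :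
    ∃ N : ρ → ι → ℕ, (∀ i ∈ s, ∑ j, N i j = p i ∧ ∀ j, N i j ≤ h i) ∧
      ∀ j, ∑ i ∈ s, N i j = d j := by
  induction s using Finset.induction_on generalizing d with
  | empty => exact ⟨fun _ _ => 0, by simp, fun j => by have := hd j; simp_all⟩
  | insert a s ha ih =>
    rw [Finset.sum_insert ha] at hsum
    simp only [Finset.sum_insert ha] at hd
    have hR2 : 2 * ∑ i ∈ s, h i ≤ ∑ i ∈ s, p i := by
      rw [Finset.mul_sum]; exact Finset.sum_le_sum fun i _ => h2 i
    have hR3 : ∑ i ∈ s, p i ≤ 3 * ∑ i ∈ s, h i := by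
      rw [Finset.mul_sum]; exact Finset.sum_le_sum fun i _ => h3 i
    have ha2 := h2 a
    have ha3 := h3 a
    have hlow := sum_tsub_le_of_le_add d (∑ i ∈ s, h i) (h a) (p a) (by omega)
      (fun j => by have := hd j; omega) ha2
    have hexc := sum_tsub_le_of_le_add d (h a) (∑ i ∈ s, h i) (∑ i ∈ s, p i) (by omega) hd hR2
    have hupp : ∑ j, min (h a) (d j) + ∑ j, (d j - h a) = ∑ j, d j := by
      rw [← Finset.sum_add_distrib]
      exact Finset.sum_congr rfl fun j _ => by omega
    obtain ⟨n, hn, hns⟩ := exists_between_sum_eq (fun j => d j - ∑ i ∈ s, h i)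
      (fun j => min (h a) (d j)) (fun j => by have := hd j; omega) (p a) hlow
      (by omega)
    have hrest : ∑ j, (d j - n j) + ∑ j, n j = ∑ j, d j := by
      rw [← Finset.sum_add_distrib]
      exact Finset.sum_congr rfl fun j _ => by have := hn j; omega
    obtain ⟨N, hN, hNd⟩ := ih (fun j => d j - n j) (fun j => by have := hn j; omega)
      (by omega)
    have hne : ∀ i ∈ s, i ≠ a := fun i hi hia => ha (hia ▸ hi)
    refine ⟨Function.update N a n, ?_, fun j => ?_⟩
    · intro i hi
      rcases Finset.mem_insert.1 hi with rfl | hi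
      · simp only [Function.update_self]
        exact ⟨hns, fun j => by have := hn j; omega⟩
      · rw [Function.update_of_ne (hne i hi)]
        exact hN i hi
    · rw [Finset.sum_insert ha, Function.update_self,
        Finset.sum_congr rfl fun i hi => by rw [Function.update_of_ne (hne i hi)], hNd j]
      have := hn j
      omega

/-- A path on `p + 2` vertices with prescribed end colors `a` and `b` has a proper coloring whose
interior uses each color `j` exactly `n j` times, as soon as no color is too frequent. -/
theorem exists_path_coloring {ι : Type*} [Fintype ι] [DecidableEq ι] (p : ℕ) (a b : ι)
    (n : ι → ℕ) (hsum : ∑ j, n j = p)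
    (hn : ∀ j, 2 * n j + (if j = a then 1 else 0) + (if j = b then 1 else 0) ≤ p + 1) :
    ∃ f : ℕ → ι, f 0 = a ∧ f (p + 1) = b ∧ (∀ i ≤ p, f i ≠ f (i + 1)) ∧
      ∀ j, ∑ i ∈ Finset.range p, (if f (i + 1) = j then 1 else 0) = n j := by
  induction p generalizing a n with
  | zero =>
    have hab : a ≠ b := by
      rintro rfl
      have := hn a
      simp at this
    refine ⟨fun i => if i = 0 then a else b, rfl, rfl, fun i hi => ?_, fun j => ?_⟩
    · obtain rfl : i = 0 := by omega
      simpa using hab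
    · have : n j ≤ ∑ j, n j := Finset.single_le_sum (fun _ _ => Nat.zero_le _) (Finset.mem_univ j)
      simp only [Finset.range_zero, Finset.sum_empty]
      omega
  | succ p ih =>
    obtain ⟨c, hca, hc1, hct⟩ : ∃ c, c ≠ a ∧ 1 ≤ n c ∧
        ∀ j, j ≠ a → j ≠ c → 2 * n j + (if j = b then 1 else 0) ≤ p + 1 := by
      by_cases ht : ∃ c, c ≠ a ∧ p + 1 < 2 * n c + (if c = b then 1 else 0)
      · obtain ⟨c, hca, hc⟩ := ht
        refine ⟨c, hca, by split_ifs at hc <;> omega, fun j hja hjc => ?_⟩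
        have hpair : n j + n c ≤ ∑ i, n i := by
          rw [← Finset.sum_pair hjc]
          exact Finset.sum_le_sum_of_subset (Finset.subset_univ _)
        by_cases hjb : j = b
        · have hcb : c ≠ b := fun h => hjc (hjb.trans h.symm)
          simp only [hjb, hcb, if_true, if_false] at hc hpair ⊢
          omega
        · simp only [hjb, if_false] at hc ⊢
          split_ifs at hc <;> omega
      · push Not at ht
        obtain ⟨c, hca, hc1⟩ : ∃ c, c ≠ a ∧ 1 ≤ n c := by
          by_contra! hcon
          have : ∑ j, n j = n a := Finset.sum_eq_single a
            (fun j _ hj => by have := hcon j hj; omega) (by simp)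
          have := hn a
          simp only [if_true] at this
          omega
        exact ⟨c, hca, hc1, fun j hja _ => ht j hja⟩
    have hdec : ∑ j, (n j - if j = c then 1 else 0) + 1 = ∑ j, n j := by
      have : ∑ j, (if j = c then 1 else 0) = 1 := by simp
      rw [← this, ← Finset.sum_add_distrib]
      refine Finset.sum_congr rfl fun j _ => ?_
      split_ifs with h
      · subst h; omega
      · omega
    obtain ⟨f, hf0, hfb, hf, hfn⟩ := ih c (fun j => n j - if j = c then 1 else 0) (by omega)
      (fun j => by
        have := hn j
        by_cases hjc : j = c
        · subst hjc
          simp only [hca, if_true, if_false] at this ⊢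
          omega
        · by_cases hja : j = a
          · simp only [hja, if_true] at this
            simp only [hjc, if_false]
            subst hja
            omega
          · have := hct j hja hjc
            simp only [hjc, if_false]
            omega)
    refine ⟨fun i => Nat.casesOn i a f, rfl, hfb, fun i hi => ?_, fun j => ?_⟩
    · cases i with
      | zero => simpa [hf0] using hca.symm
      | succ i => exact hf i (by omega)
    · rw [Finset.sum_range_succ']
      have := hfn j
      simp only [hf0] at this ⊢
      rw [this]
      by_cases hjc : j = c
      · subst hjc; simp only [if_true]; omega
      · simp [hjc, Ne.symm hjc]

theorem exists_fiber_card_eq {ι : Type*} [Fintype ι] [DecidableEq ι] (m : ℕ) (n : ι → ℕ)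
    (hsum : ∑ j, n j = m) :
    ∃ f : Fin m → ι, ∀ j, ∑ i, (if f i = j then 1 else 0) = n j := by
  let e : Fin m ≃ Σ j, Fin (n j) := Fintype.equivOfCardEq (by simp [hsum])
  refine ⟨fun i => (e i).1, fun j => ?_⟩
  rw [e.sum_comp (fun y : Σ j, Fin (n j) => if y.1 = j then 1 else 0), Fintype.sum_sigma,
    Finset.sum_eq_single j (fun i _ hi => by simp [hi]) (by simp)]
  simp

theorem card_filter_color_eq_sum {V : Type*} [Fintype V] {k : ℕ} (φ : V → Fin k) (j : Fin k) :
    (Finset.univ.filter fun v => φ v = j).card = ∑ v, if φ v = j then 1 else 0 := by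
  rw [Finset.card_filter]

theorem sum_color_counts {V : Type*} [Fintype V] {k : ℕ} (φ : V → Fin k) :
    ∑ j, ∑ v, (if φ v = j then 1 else 0) = Fintype.card V := by
  rw [Finset.sum_comm]
  simp

theorem color_count_le {V : Type*} [Fintype V] {k : ℕ} (φ : V → Fin k) (j : Fin k) :
    ∑ v, (if φ v = j then 1 else 0) ≤ Fintype.card V := by
  rw [← card_filter_color_eq_sum]
  exact Finset.card_le_univ _

/-- Adding `(k - 1) * |W|` isolated vertices makes any proper `k`-coloring equitable. -/
theorem exists_equitable_addIsolated {W : Type*} [Fintype W] {k q : ℕ} (hk : 1 ≤ k)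
    (hq : Fintype.card W = q) (H : SimpleGraph W) (φ : W → Fin k) (hφ : IsProperColoring H φ) :
    ∃ ψ : W ⊕ Fin (q * (k - 1)) → Fin k,
      IsProperColoring (addIsolated H (q * (k - 1))) ψ ∧ IsEquitable ψ := by
  have hle := color_count_le φ
  have hmul : q * (k - 1) + q = q * k := by
    obtain ⟨m, rfl⟩ := Nat.exists_eq_add_of_le' hk
    simp [Nat.mul_succ]
  have hcompl : ∑ j, (q - ∑ v, (if φ v = j then 1 else 0)) +
      ∑ j, ∑ v, (if φ v = j then 1 else 0) = q * k := by
    rw [← Finset.sum_add_distrib,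
      Finset.sum_congr rfl fun j _ => Nat.sub_add_cancel (hq ▸ hle j)]
    simp [mul_comm]
  rw [sum_color_counts, hq] at hcompl
  obtain ⟨f, hf⟩ := exists_fiber_card_eq (q * (k - 1))
    (fun j => q - ∑ v, (if φ v = j then 1 else 0)) (by omega)
  refine ⟨Sum.elim φ f, ?_, fun j => Or.inl ?_⟩
  · rintro (u | u) (v | v) huv <;> simp only [addIsolated, SimpleGraph.fromRel_adj] at huv
    · exact hφ u v (huv.2.elim id SimpleGraph.Adj.symm)
    all_goals simp at huv
  · rw [card_filter_color_eq_sum, Fintype.sum_sum_type]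
    change (∑ v, if φ v = j then 1 else 0) + (∑ i, if f i = j then 1 else 0) = _
    rw [hf, Fintype.card_sum, hq, Fintype.card_fin, add_comm q, hmul, Nat.mul_div_cancel _ (by omega)]
    have := hle j
    omega

/-- Balanced color totals: `m` splits over `k` colors into parts `⌊m/k⌋` and `⌈m/k⌉`. -/
theorem exists_balanced_counts (m k : ℕ) (hk : 1 ≤ k) :
    ∃ t : Fin k → ℕ, ∑ j, t j = m ∧ ∀ j, t j = m / k ∨ t j = (m + k - 1) / k := by
  have h₁ := Nat.div_add_mod m k
  have h₂ := Nat.div_add_mod (m + k - 1) k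
  have h₃ := Nat.mod_lt (m + k - 1) hk
  have hceil : (m + k - 1) / k ≤ m / k + 1 := by
    rw [← Nat.add_div_right _ hk]
    exact Nat.div_le_div_right (by omega)
  obtain ⟨t, ht, hts⟩ := exists_between_sum_eq (fun _ : Fin k => m / k)
    (fun _ => (m + k - 1) / k) (fun _ => Nat.div_le_div_right (by omega)) m
    (by simp; omega) (by simp; omega)
  exact ⟨t, hts, fun j => by have := ht j; omega⟩

theorem path_capacity_bound {k p x c : ℕ} (hk : 3 ≤ k) (hx : 1 ≤ x) (hc : c ≤ k)
    (hp : p = k + 2 + c + x * (k + 1)) : x + p ≤ k * ((p - 1) / 2) := by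
  rcases hk.eq_or_lt with rfl | hk
  · omega
  · have h₁ : 4 * ((p - 1) / 2) ≤ k * ((p - 1) / 2) := Nat.mul_le_mul_right _ hk
    have h₂ : x * 1 ≤ x * (k + 1) := Nat.mul_le_mul_left _ (by omega)
    omega

/-- If `G` contains pairwise disjoint pendant paths `P_1, …, P_r`, each with
`p i = k + 2 + c i + x i * (k+1) ≥ 2k + 3` vertices (`x i ≥ 1`, `0 ≤ c i ≤ k`), whose
endpoints' outside neighbors lie in `Q = V(G) \ (P_1 ∪ ⋯ ∪ P_r)`, and `x_1 + ⋯ + x_r ≥ |Q|`,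
then `G` is equitably `k`-colorable iff the graph obtained from the subgraph induced by `Q`
by adding `|Q| * (k-1)` isolated vertices is equitably `k`-colorable. -/
theorem stmt7 {V : Type*} [Fintype V] [DecidableEq V] (G : SimpleGraph V)
    (k r : ℕ) (hk : 3 ≤ k) (p x c : Fin r → ℕ)
    (hx : ∀ i, 1 ≤ x i) (hc : ∀ i, c i ≤ k)
    (hp : ∀ i, p i = k + 2 + c i + x i * (k + 1))
    (hbig : ∀ i, 2 * k + 3 ≤ p i)
    (w : (i : Fin r) → Fin (p i) → V)
    (hpath : ∀ i, IsPendantPath G (w i))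
    (hdisj : ∀ i j : Fin r, i ≠ j → ∀ a b, w i a ≠ w j b)
    (hnbr : ∀ (i : Fin r) (a : Fin (p i)) (b : V), G.Adj (w i a) b →
      (∃ a', b = w i a') ∨ (∀ (j : Fin r) (a' : Fin (p j)), b ≠ w j a'))
    (Q : Finset V) (hQ : ∀ v : V, v ∈ Q ↔ ∀ (i : Fin r) (a : Fin (p i)), w i a ≠ v)
    (hsum : Q.card ≤ ∑ i, x i) :
    (∃ φ : V → Fin k, IsProperColoring G φ ∧ IsEquitable φ) ↔
    (∃ ψ : (↑Q : Set V) ⊕ Fin (Q.card * (k - 1)) → Fin k,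
      IsProperColoring (addIsolated (G.induce (↑Q : Set V)) (Q.card * (k - 1))) ψ ∧
      IsEquitable ψ) := by
  have hcardQ : Fintype.card (↑Q : Set V) = Q.card := by simp
  constructor
  · rintro ⟨φ, hφ, -⟩
    obtain ⟨ψ, hψ, hψe⟩ := exists_equitable_addIsolated (by omega) hcardQ
      (G.induce (↑Q : Set V)) (fun v => φ v) (fun u v huv => hφ u v huv)
    refine ⟨ψ, hψ, ?_⟩
    convert hψe
  rintro ⟨ψ, hψ, -⟩
  -- the partition of the vertices into `Q` and the paths
  let g : (↑Q : Set V) ⊕ (Σ i, Fin (p i)) → V := Sum.elim (fun v => v) (fun y => w y.1 y.2)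
  have hg : Function.Bijective g := by
    constructor
    · rintro (⟨u, hu⟩ | ⟨i, a⟩) (⟨v, hv⟩ | ⟨j, b⟩) huv <;>
        simp only [g, Sum.elim_inl, Sum.elim_inr] at huv
      · subst huv; rfl
      · exact absurd huv.symm ((hQ u).1 hu j b)
      · exact absurd huv ((hQ v).1 hv i a)
      · by_cases hij : i = j
        · subst hij
          rw [(hpath i).1 huv]
        · exact absurd huv (hdisj i j hij a b)
    · intro v
      by_cases hv : v ∈ Q
      · exact ⟨Sum.inl ⟨v, hv⟩, rfl⟩
      · rw [hQ] at hv
        push Not at hv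
        obtain ⟨i, a, rfl⟩ := hv
        exact ⟨Sum.inr ⟨i, a⟩, rfl⟩
  let e := Equiv.ofBijective g hg
  have hcardV : Fintype.card V = Q.card + ∑ i, p i := by
    rw [← Fintype.card_congr e, Fintype.card_sum, hcardQ, Fintype.card_sigma]
    simp
  let cQ : (↑Q : Set V) → Fin k := fun v => ψ (Sum.inl v)
  have hcQ : ∀ u v : (↑Q : Set V), G.Adj u v → cQ u ≠ cQ v := by
    intro u v huv
    refine hψ _ _ ?_
    simp only [addIsolated, SimpleGraph.fromRel_adj]
    exact ⟨fun h => huv.ne (congrArg Subtype.val (Sum.inl_injective h)), Or.inl huv⟩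
  -- the endpoints of the paths attach to `Q`
  choose hinj u v hu hv hadj using hpath
  have huQ : ∀ i, u i ∈ Q := by
    intro i
    have hpi := hbig i
    rcases hnbr i ⟨0, by omega⟩ (u i) ((hadj _ _ _).2 (Or.inr (Or.inl ⟨rfl, rfl⟩))) with
      ⟨a, ha⟩ | h
    · exact absurd ⟨a, ha.symm⟩ (hu i)
    · exact (hQ _).2 fun j a => (h j a).symm
  have hvQ : ∀ i, v i ∈ Q := by
    intro i
    have hpi := hbig i
    rcases hnbr i ⟨p i - 1, by omega⟩ (v i) ((hadj _ _ _).2 (Or.inr (Or.inr ⟨rfl, rfl⟩))) with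
      ⟨a, ha⟩ | h
    · exact absurd ⟨a, ha.symm⟩ (hv i)
    · exact (hQ _).2 fun j a => (h j a).symm
  -- color totals on the paths
  set m := Fintype.card V with hm
  obtain ⟨t, htsum, ht⟩ := exists_balanced_counts m k (by omega)
  have hcap : m ≤ k * ∑ i, (p i - 1) / 2 := by
    calc m ≤ ∑ i, (x i + p i) := by rw [Finset.sum_add_distrib]; omega
      _ ≤ ∑ i, k * ((p i - 1) / 2) :=
          Finset.sum_le_sum fun i _ => path_capacity_bound hk (hx i) (hc i) (hp i)
      _ = _ := by rw [Finset.mul_sum]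
  have hceil : (m + k - 1) / k ≤ ∑ i, (p i - 1) / 2 := by
    refine Nat.lt_succ_iff.1 ((Nat.div_lt_iff_lt_mul (by omega)).2 ?_)
    rw [Nat.succ_mul, mul_comm]
    omega
  have hfloor : Q.card ≤ m / k := by
    rw [Nat.le_div_iff_mul_le (by omega)]
    have h₁ : (∑ i, x i) * k ≤ ∑ i, p i := by
      rw [Finset.sum_mul]
      refine Finset.sum_le_sum fun i _ => ?_
      rw [hp i, Nat.mul_succ]
      omega
    have h₂ := Nat.mul_le_mul_right k hsum
    omega
  have hfc : m / k ≤ (m + k - 1) / k := Nat.div_le_div_right (by omega)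
  have hqt : ∀ j, ∑ y, (if cQ y = j then 1 else 0) ≤ t j := by
    intro j
    have h₁ := color_count_le cQ j
    have h₂ := ht j
    omega
  have hdsum : ∑ j, (t j - ∑ y, (if cQ y = j then 1 else 0)) = ∑ i, p i := by
    have h₁ : ∑ j, (t j - ∑ y, (if cQ y = j then 1 else 0)) +
        ∑ j, ∑ y, (if cQ y = j then 1 else 0) = ∑ j, t j := by
      rw [← Finset.sum_add_distrib]
      exact Finset.sum_congr rfl fun j _ => Nat.sub_add_cancel (hqt j)
    rw [sum_color_counts, hcardQ] at h₁
    omega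
  obtain ⟨N, hN, hNd⟩ := exists_matrix_row_col_sums p (fun i => (p i - 1) / 2)
    (fun i => by omega) (fun i => by have := hbig i; omega) Finset.univ
    (fun j => t j - ∑ y, (if cQ y = j then 1 else 0))
    (fun j => by have := ht j; omega) hdsum
  have hpc : ∀ i, ∃ f : ℕ → Fin k, f 0 = cQ ⟨u i, huQ i⟩ ∧ f (p i + 1) = cQ ⟨v i, hvQ i⟩ ∧
      (∀ a ≤ p i, f a ≠ f (a + 1)) ∧
      ∀ j, ∑ a ∈ Finset.range (p i), (if f (a + 1) = j then 1 else 0) = N i j := by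
    intro i
    refine exists_path_coloring (p i) _ _ (N i) (hN i (Finset.mem_univ i)).1 fun j => ?_
    have h₁ := (hN i (Finset.mem_univ i)).2 j
    have h₂ := hbig i
    split_ifs <;> omega
  choose f hfu hfv hf hfN using hpc
  -- the combined coloring
  let φ : V → Fin k := fun y => Sum.elim cQ (fun y => f y.1 (y.2 + 1)) (e.symm y)
  have hφe : ∀ y, φ (g y) = Sum.elim cQ (fun y => f y.1 (y.2 + 1)) y := fun y =>
    congrArg _ (e.symm_apply_apply y)
  have hφQ : ∀ y (hy : y ∈ Q), φ y = cQ ⟨y, hy⟩ := fun y hy => hφe (Sum.inl ⟨y, hy⟩)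
  have hφP : ∀ i a, φ (w i a) = f i (a + 1) := fun i a => hφe (Sum.inr ⟨i, a⟩)
  have hproper : ∀ i a b, G.Adj (w i a) b → φ (w i a) ≠ φ b := by
    intro i a b hab
    have hpi := hbig i
    rcases (hadj i a b).1 hab with ⟨a', rfl, h | h⟩ | ⟨h, rfl⟩ | ⟨h, rfl⟩
    · rw [hφP, hφP, ← h]
      exact hf i _ (by omega)
    · rw [hφP, hφP, ← h]
      exact (hf i _ (by omega)).symm
    · rw [hφP, hφQ _ (huQ i), ← hfu, h]
      exact (hf i 0 (by omega)).symm
    · rw [hφP, hφQ _ (hvQ i), ← hfv, h, Nat.sub_add_cancel (by omega)]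
      exact hf i _ le_rfl
  refine ⟨φ, fun y z hyz => ?_, fun j => ?_⟩
  · obtain ⟨y | y, rfl⟩ := hg.2 y
    · obtain ⟨z | z, rfl⟩ := hg.2 z
      · rw [hφe, hφe]
        exact hcQ y z hyz
      · exact (hproper _ _ _ hyz.symm).symm
    · exact hproper _ _ _ hyz
  · have hcount : ∑ y, (if φ y = j then 1 else 0) = t j := by
      rw [← e.sum_comp, Fintype.sum_sum_type, Fintype.sum_sigma]
      have h₁ : ∀ y, φ (e (Sum.inl y)) = cQ y := fun y => hφe (Sum.inl y)
      have h₂ : ∀ y, φ (e (Sum.inr y)) = f y.1 (y.2 + 1) := fun y => hφe (Sum.inr y)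
      simp only [h₁, h₂]
      have h₃ : ∀ i, ∑ a : Fin (p i), (if f i (a + 1) = j then 1 else 0) = N i j := fun i => by
        rw [← hfN i j, ← Fin.sum_univ_eq_sum_range (fun a => if f i (a + 1) = j then 1 else 0)]
      rw [Finset.sum_congr rfl fun i _ => h₃ i, hNd j]
      exact Nat.add_sub_cancel' (hqt j)
    rw [card_filter_color_eq_sum, hcount]
    exact ht j
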